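/- For every integer r ≥ 5, every finite simple graph G that contains no clique on r−2 vertices and satisfies χ(G) ≥ r+1 has at least r+9 vertices; equivalently, the vertex Folkman number F_v(2_r; r−2) ≥ r+9. -/

import Mathlib

open SimpleGraph

/-- The vertex Folkman number `F_v(2_r; q)`: the minimum number of vertices of a
`K_q`-free finite simple graph with chromatic number at least `r + 1`. -/
noncomputable def folkman (r q : ℕ) : ℕ :=
  sInf {n : ℕ | ∃ G : SimpleGraph (Fin n),
    G.CliqueFree q ∧ (r + 1 : ℕ∞) ≤ G.chromaticNumber}

/-!
Fix `q` and show, by induction on `r ≤ q + 2`, that a `K_q`-free graph with at most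
`3 r + 4 - 2 q` vertices is `r`-colourable; the case `q = r - 2` is the theorem. If the graph has
three pairwise nonadjacent vertices, give them one colour and delete them. Otherwise its
complement `H` is triangle-free, and the Tutte–Berge formula turns a failure of `r`-colourability
into a vertex set `T` whose size `N` and number `o` of odd components of `H[T]` satisfy
`2 r + 2 ≤ N + o`. Then `N - o ≤ 14`, so every component is small enough for the Erdős–Szekeres
bound to give an independent set of at least a quarter of its size, with a bonus of `3 / 4` when
that size is odd. Adding these up, `H[T]` has an independent set of size `(N + 3 o) / 4 > q - 1`,
which is a clique of size `q` in the original graph.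

The Folkman number is an infimum over a nonempty set because shift graphs are triangle-free and
have unbounded chromatic number.
-/

universe u

variable {V W : Type*} {G : SimpleGraph V} {H : SimpleGraph W}

lemma cliqueFreeOn_one_iff {s : Set V} : G.CliqueFreeOn s 1 ↔ s = ∅ := by
  refine ⟨fun h ↦ Set.eq_empty_of_forall_notMem fun v hv ↦ ?_, ?_⟩
  · exact h (t := {v}) (by simpa using hv) (isNClique_one.mpr ⟨v, rfl⟩)
  · rintro rfl
    simp

theorem card_lt_choose_of_cliqueFreeOn {s t : ℕ} {S : Finset V}
    (hG : G.CliqueFreeOn S (s + 1)) (hGc : Gᶜ.CliqueFreeOn S (t + 1)) :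
    S.card < (s + t).choose s := by
  classical
  induction s generalizing t S with
  | zero => simpa [cliqueFreeOn_one_iff] using hG
  | succ s ihs =>
    induction t generalizing S with
    | zero => simpa [cliqueFreeOn_one_iff] using hGc
    | succ t iht =>
      obtain rfl | ⟨v, hv⟩ := S.eq_empty_or_nonempty
      · exact Nat.choose_pos (by omega)
      have hN : (S.filter (G.Adj v)).card < (s + (t + 1)).choose s :=
        ihs (by simpa [Set.inter_def] using CliqueFreeOn.of_succ _ hG (Finset.mem_coe.mpr hv))
          (CliqueFreeOn.subset _ (Finset.coe_subset.mpr (Finset.filter_subset _ _)) hGc)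
      have hM : (S.filter (Gᶜ.Adj v)).card < (s + 1 + t).choose (s + 1) :=
        iht (CliqueFreeOn.subset _ (Finset.coe_subset.mpr (Finset.filter_subset _ _)) hG)
          (by simpa [Set.inter_def] using CliqueFreeOn.of_succ _ hGc (Finset.mem_coe.mpr hv))
      have hS : S = insert v (S.filter (G.Adj v) ∪ S.filter (Gᶜ.Adj v)) := by
        ext w
        by_cases hw : w = v <;> grind [compl_adj]
      have hcard := (congrArg Finset.card hS).le.trans
        ((Finset.card_insert_le _ _).trans (Nat.succ_le_succ (Finset.card_union_le _ _)))
      have hpascal : (s + 1 + (t + 1)).choose (s + 1) =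
          (s + (t + 1)).choose s + (s + 1 + t).choose (s + 1) := by
        rw [show s + 1 + t = s + (t + 1) by omega, ← Nat.choose_succ_succ]
        congr 1
        omega
      omega

theorem lt_indepNum_of_cliqueFree [Finite V] {s t : ℕ} (hG : G.CliqueFree (s + 1))
    (hV : (s + t).choose s ≤ Nat.card V) : t < G.indepNum := by
  have := Fintype.ofFinite V
  by_contra! hle
  have hGc : Gᶜ.CliqueFreeOn (Finset.univ : Finset V) (t + 1) := fun I _ hI ↦ by
    rw [isNClique_compl] at hI
    have := hI.isIndepSet.card_le_indepNum
    have := hI.card_eq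
    omega
  have hcard := card_lt_choose_of_cliqueFreeOn hG.cliqueFreeOn hGc
  rw [Finset.card_univ, ← Nat.card_eq_fintype_card] at hcard
  exact hV.not_gt hcard

lemma card_add_three_mul_mod_two_le [Finite V] (hG : G.CliqueFree 3) (hV : Nat.card V ≤ 17) :
    Nat.card V + 3 * (Nat.card V % 2) ≤ 4 * G.indepNum := by
  obtain ⟨a, ha⟩ : ∃ a, a = Nat.card V := ⟨_, rfl⟩
  rw [← ha] at hV ⊢
  obtain rfl | hpos := a.eq_zero_or_pos
  · simp
  have hchoose : (2 + ((a + 3 * (a % 2) + 3) / 4 - 1)).choose 2 ≤ a := by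
    interval_cases a <;> decide
  have := lt_indepNum_of_cliqueFree hG (hchoose.trans_eq ha)
  omega

lemma sum_indepNum_toSimpleGraph_le [Finite V] [Fintype G.ConnectedComponent] :
    ∑ C : G.ConnectedComponent, C.toSimpleGraph.indepNum ≤ G.indepNum := by
  classical
  choose I hI using fun C : G.ConnectedComponent ↦
    exists_isNIndepSet_indepNum (G := C.toSimpleGraph)
  let J : Finset V := (Finset.univ.sigma I).map
    ⟨fun p ↦ p.2.1, by
      rintro ⟨C, v, hv⟩ ⟨D, w, hw⟩ rfl
      obtain rfl : C = D := hv.symm.trans hw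
      rfl⟩
  have hJ : G.IsIndepSet J := by
    simp only [J, Finset.coe_map]
    rintro _ ⟨⟨C, v, hv⟩, hvI, rfl⟩ _ ⟨⟨D, w, hw⟩, hwI, rfl⟩ hne hadj
    obtain rfl : C = D :=
      hv.symm.trans ((ConnectedComponent.connectedComponentMk_eq_of_adj hadj).trans hw)
    simp only [Finset.mem_coe, Finset.mem_sigma] at hvI hwI
    exact (hI C).isIndepSet hvI.2 hwI.2 (fun h ↦ hne (congrArg Subtype.val h)) hadj
  simpa [J, (hI _).card_eq] using hJ.card_le_indepNum

lemma sum_card_toSimpleGraph [Finite V] [Fintype G.ConnectedComponent] :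
    ∑ C : G.ConnectedComponent, Nat.card C = Nat.card V := by
  rw [← Nat.card_sigma]
  exact Nat.card_congr (Equiv.sigmaFiberEquiv G.connectedComponentMk)

lemma sum_card_mod_two_eq_ncard_oddComponents [Fintype G.ConnectedComponent] :
    ∑ C : G.ConnectedComponent, Nat.card C % 2 = G.oddComponents.ncard := by
  classical
  have hmod (C : G.ConnectedComponent) :
      Nat.card C % 2 = if C ∈ G.oddComponents then 1 else 0 := by
    have : C ∈ G.oddComponents ↔ Odd (Nat.card C) := Iff.rfl
    split_ifs <;> grind
  simp only [hmod, Finset.sum_boole, Set.ncard_eq_toFinset_card', Nat.cast_id]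
  congr
  ext
  simp

theorem card_add_three_mul_ncard_oddComponents_le [Finite V] (hG : G.CliqueFree 3)
    (hV : Nat.card V ≤ G.oddComponents.ncard + 16) :
    Nat.card V + 3 * G.oddComponents.ncard ≤ 4 * G.indepNum := by
  have := Fintype.ofFinite G.ConnectedComponent
  have hle (C : G.ConnectedComponent) : Nat.card C ≤ 17 := by
    have heven : Nat.card C - Nat.card C % 2 ≤
        ∑ D : G.ConnectedComponent, (Nat.card D - Nat.card D % 2) :=
      Finset.single_le_sum (f := fun D : G.ConnectedComponent ↦ Nat.card D - Nat.card D % 2)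
        (fun _ _ ↦ Nat.zero_le _) (Finset.mem_univ C)
    rw [Finset.sum_tsub_distrib _ fun _ _ ↦ Nat.mod_le _ _, sum_card_toSimpleGraph,
      sum_card_mod_two_eq_ncard_oddComponents] at heven
    omega
  calc Nat.card V + 3 * G.oddComponents.ncard
      = ∑ C : G.ConnectedComponent, (Nat.card C + 3 * (Nat.card C % 2)) := by
        rw [Finset.sum_add_distrib, ← Finset.mul_sum, sum_card_toSimpleGraph,
          sum_card_mod_two_eq_ncard_oddComponents]
    _ ≤ ∑ C : G.ConnectedComponent, 4 * C.toSimpleGraph.indepNum :=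
        Finset.sum_le_sum fun C _ ↦
          card_add_three_mul_mod_two_le (hG.comap (Copy.induce G C.supp).isContained) (hle C)
    _ ≤ 4 * G.indepNum := by
        rw [← Finset.mul_sum]
        exact Nat.mul_le_mul_left 4 sum_indepNum_toSimpleGraph_le

lemma compl_colorable_of_isPerfectMatching [Finite V] {M : G.Subgraph}
    (hM : M.IsPerfectMatching) : Gᶜ.Colorable (Nat.card V / 2) := by
  classical
  have := Fintype.ofFinite V
  let color (v : V) : M.edgeSet := hM.1.toEdge ⟨v, hM.2 v⟩
  have mem_color (v : V) : v ∈ (color v : Sym2 V) := hM.1.mem_coe_toEdge (hM.2 v)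
  have hcolor {v w : V} (hvw : Gᶜ.Adj v w) : color v ≠ color w := fun heq ↦ by
    have hedge : (color v : Sym2 V) = s(v, w) :=
      (Sym2.mem_and_mem_iff hvw.ne).mp ⟨mem_color v, heq ▸ mem_color w⟩
    exact hvw.2 (M.adj_sub (hedge ▸ (color v).2 : s(v, w) ∈ M.edgeSet))
  have hcard : Fintype.card V = 2 * Fintype.card M.edgeSet := by
    have hdeg := Subgraph.isPerfectMatching_iff_forall_degree.mp hM
    have hsum := M.spanningCoe.sum_degrees_eq_twice_card_edges
    rw [edgeFinset_card] at hsum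
    simp only [Subgraph.degree_spanningCoe, hdeg, Subgraph.edgeSet_spanningCoe] at hsum
    simpa using hsum
  convert (Coloring.mk color hcolor).colorable
  rw [Nat.card_eq_fintype_card]
  omega

lemma exists_ncard_compl_lt_ncard_oddComponents [Finite V] (hG : G.IsMatchingFree) :
    ∃ T : Set V, Tᶜ.ncard < (G.induce T).oddComponents.ncard := by
  have htutte := mt tutte.mpr (not_exists.mpr hG)
  push Not at htutte
  obtain ⟨U, hU⟩ := htutte
  refine ⟨Set.univ \ U, ?_⟩
  rw [← Set.compl_eq_univ_sdiff, compl_compl, induce_eq_coe_induce_top, Set.compl_eq_univ_sdiff]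
  exact hU

lemma ncard_oddComponents_congr (φ : G ≃g H) :
    G.oddComponents.ncard = H.oddComponents.ncard := by
  have hodd (C : G.ConnectedComponent) :
      Odd C.supp.ncard ↔ Odd (φ.connectedComponentEquiv C).supp.ncard := by
    rw [← Nat.card_coe_set_eq, Nat.card_congr (C.isoEquivSupp φ), Nat.card_coe_set_eq]
  exact Nat.card_congr (φ.connectedComponentEquiv.subtypeEquiv hodd)

/-- For `T` inside the range of an embedding of graphs, the isomorphism from the subgraph induced on
the preimage of `T` to the one induced on `T`. It carries odd components back along the embedding.
-/
noncomputable def induceIsoPreimage (f : G ↪g H) {T : Set W} (hT : T ⊆ Set.range f) :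
    G.induce (f ⁻¹' T) ≃g H.induce T where
  toEquiv := Equiv.ofBijective (fun v ↦ ⟨f v, v.2⟩)
    ⟨fun v w hvw ↦ by simpa [Subtype.ext_iff] using hvw, fun ⟨w, hw⟩ ↦ by
      obtain ⟨v, rfl⟩ := hT hw
      exact ⟨⟨v, hw⟩, rfl⟩⟩
  map_rel_iff' := f.map_rel_iff

theorem exists_two_mul_lt_ncard_add_ncard_oddComponents [Finite V] {c : ℕ}
    (hc : ¬ Gᶜ.Colorable c) :
    ∃ T : Set V, 2 * c < T.ncard + (G.induce T).oddComponents.ncard := by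
  obtain hlt | hle := lt_or_ge (2 * c) (Nat.card V)
  · exact ⟨Set.univ, by rw [Set.ncard_univ]; omega⟩
  -- Padding with universal vertices turns the Tutte–Berge formula into Tutte's theorem: a perfect
  -- matching of `H` would pair up the `2 * c` vertices, `c` colours sufficing for its complement.
  let H : SimpleGraph (V ⊕ Fin (2 * c - Nat.card V)) := (Gᶜ ⊕g ⊥)ᶜ
  have hcard : Nat.card (V ⊕ Fin (2 * c - Nat.card V)) = 2 * c := by
    rw [Nat.card_sum, Nat.card_fin]
    omega
  have hfree : H.IsMatchingFree := fun M hM ↦ hc <| by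
    have hcol := compl_colorable_of_isPerfectMatching hM
    rw [compl_compl, hcard, Nat.mul_div_cancel_left c two_pos] at hcol
    exact hcol.of_sum_left
  obtain ⟨T, hT⟩ := exists_ncard_compl_lt_ncard_oddComponents hfree
  have hTcard := Set.ncard_add_ncard_compl T
  by_cases hrange : T ⊆ Set.range Sum.inl
  · let f : G ↪g H := ⟨.inl, fun {v w} ↦ by
        have := G.ne_of_adj (a := v) (b := w)
        simp only [H, compl_adj, sum_adj, Function.Embedding.inl_apply, ne_eq, Sum.inl.injEq]
        tauto⟩
    refine ⟨f ⁻¹' T, ?_⟩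
    rw [ncard_oddComponents_congr (induceIsoPreimage f hrange), ← Nat.card_coe_set_eq,
      Nat.card_congr (induceIsoPreimage f hrange).toEquiv, Nat.card_coe_set_eq]
    omega
  · obtain ⟨_ | i, hi, hinr⟩ := Set.not_subset.mp hrange
    · simp at hinr
    have hconn : (H.induce T).Connected :=
      .of_isUniversal (v := ⟨.inr i, hi⟩) fun ⟨w, hw⟩ hne ↦ by
        cases w <;> simp_all [H]
    have := hconn.preconnected.subsingleton_connectedComponent
    have hone := Set.ncard_le_one_of_subsingleton (H.induce T).oddComponents
    have hparity := (H.induce T).odd_ncard_oddComponents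
    rw [Nat.card_coe_set_eq, show T.ncard = 2 * c by omega,
      show (H.induce T).oddComponents.ncard = 1 by omega] at hparity
    exact absurd (hparity.mp odd_one) (Nat.not_odd_iff_even.mpr (even_two_mul c))

lemma indepNum_induce_le [Finite V] (s : Set V) : (G.induce s).indepNum ≤ G.indepNum := by
  have hcompl : (G.induce s)ᶜ = Gᶜ.induce s := by
    ext
    simp [Subtype.ext_iff]
  simpa only [← cliqueNum_compl, hcompl] using Gᶜ.cliqueNum_induce_le s

theorem compl_colorable_of_indepNum_lt [Finite V] {q r : ℕ} (hG : G.CliqueFree 3)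
    (hα : G.indepNum < q) (hrq : r ≤ q + 2) (hV : Nat.card V + 2 * q ≤ 3 * r + 4) :
    Gᶜ.Colorable r := by
  by_contra hcol
  obtain ⟨T, hT⟩ := exists_two_mul_lt_ncard_add_ncard_oddComponents hcol
  have hTV : T.ncard ≤ Nat.card V := Set.ncard_le_card T
  have hparity := (G.induce T).odd_ncard_oddComponents
  rw [Nat.card_coe_set_eq] at hparity
  have hsum : 2 * r + 2 ≤ T.ncard + (G.induce T).oddComponents.ncard := by grind
  have hindep := card_add_three_mul_ncard_oddComponents_le
    (hG.comap (Copy.induce G T).isContained) (by rw [Nat.card_coe_set_eq]; omega)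
  rw [Nat.card_coe_set_eq] at hindep
  have := indepNum_induce_le (G := G) T
  omega

lemma colorable_succ_of_isIndepSet {I : Set V} {n : ℕ} (hI : G.IsIndepSet I)
    (h : (G.induce Iᶜ).Colorable n) : G.Colorable (n + 1) := by
  classical
  obtain ⟨C⟩ := h
  let color (v : V) : Option (Fin n) := if hv : v ∈ I then none else some (C ⟨v, hv⟩)
  have hcolor {v w : V} (hvw : G.Adj v w) : color v ≠ color w := by
    by_cases hv : v ∈ I <;> by_cases hw : w ∈ I
    · exact absurd hvw (hI hv hw hvw.ne)
    all_goals simp only [color, hv, hw, dite_true, dite_false, ne_eq, reduceCtorEq,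
      not_false_eq_true, Option.some.injEq]
    exact C.valid hvw
  simpa using (Coloring.mk color hcolor).colorable

theorem colorable_of_cliqueFree {q r : ℕ} {V : Type u} [Finite V] {G : SimpleGraph V}
    (hG : G.CliqueFree q) (hrq : r ≤ q + 2) (hV : Nat.card V + 2 * q ≤ 3 * r + 4) :
    G.Colorable r := by
  induction r generalizing V with
  | zero =>
    obtain hempty | hnonempty := isEmpty_or_nonempty V
    · exact .of_isEmpty 0
    · have hcard : 0 < Nat.card V := Nat.card_pos
      have hq : q ≠ 0 := by rintro rfl; exact not_cliqueFree_zero hG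
      have hq' : q ≠ 1 := by rintro rfl; exact not_isEmpty_of_nonempty V (cliqueFree_one.mp hG)
      omega
  | succ r ih =>
    by_cases hfree : Gᶜ.CliqueFree 3
    · rw [← compl_compl G]
      refine compl_colorable_of_indepNum_lt hfree ?_ hrq hV
      rw [indepNum_compl]
      obtain ⟨K, hK⟩ := G.exists_isNClique_cliqueNum
      exact lt_of_not_ge fun hle ↦ hK.not_cliqueFree (hG.mono hle)
    · obtain ⟨I, hI⟩ : ∃ I, Gᶜ.IsNClique 3 I := by simpa [CliqueFree] using hfree
      rw [isNClique_compl] at hI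
      refine colorable_succ_of_isIndepSet hI.isIndepSet
        (ih (hG.comap (Copy.induce G _).isContained) (by omega) ?_)
      have hcard := Set.ncard_add_ncard_compl (I : Set V)
      rw [Set.ncard_coe_finset, hI.card_eq] at hcard
      rw [Nat.card_coe_set_eq]
      omega

/-- The shift graph on the pairs `a < b`: two pairs are joined when one starts where the other
ends. It witnesses that triangle-free graphs can have arbitrarily large chromatic number. -/
def shiftGraph (α : Type*) [Preorder α] : SimpleGraph {p : α × α // p.1 < p.2} where
  Adj p q := p.1.2 = q.1.1 ∨ q.1.2 = p.1.1
  symm := ⟨fun _ _ ↦ Or.symm⟩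
  loopless := ⟨fun p hp ↦ hp.elim p.2.ne' p.2.ne'⟩

lemma shiftGraph_cliqueFree_three {α : Type*} [Preorder α] : (shiftGraph α).CliqueFree 3 := by
  classical
  intro s hs
  obtain ⟨⟨⟨a, a'⟩, ha⟩, ⟨⟨b, b'⟩, hb⟩, ⟨⟨c, c'⟩, hc⟩, hab, hac, hbc, -⟩ := is3Clique_iff.mp hs
  simp only [shiftGraph] at hab hac hbc ha hb hc
  grind

lemma card_le_two_pow_of_shiftGraph_colorable {α : Type*} [LinearOrder α] {c : ℕ}
    (h : (shiftGraph α).Colorable c) : Nat.card α ≤ 2 ^ c := by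
  obtain ⟨C⟩ := h
  let upColors (a : α) : Set (Fin c) := {x | ∃ (b : α) (hab : a < b), C ⟨(a, b), hab⟩ = x}
  have hne {a b : α} (hab : a < b) : upColors a ≠ upColors b := fun heq ↦ by
    obtain ⟨d, hbd, hd⟩ : C ⟨(a, b), hab⟩ ∈ upColors b := heq ▸ ⟨b, hab, rfl⟩
    exact C.valid (v := ⟨(b, d), hbd⟩) (w := ⟨(a, b), hab⟩) (.inr rfl) hd
  have hinj : upColors.Injective := .of_lt_imp_ne fun _ _ ↦ hne
  simpa using Nat.card_le_card_of_injective upColors hinj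

lemma add_one_le_chromaticNumber_iff {r : ℕ} :
    (r + 1 : ℕ∞) ≤ G.chromaticNumber ↔ ¬ G.Colorable r := by
  rw [← chromaticNumber_le_iff_colorable, not_le, ENat.add_one_le_iff (ENat.natCast_ne_top r)]

lemma exists_fin_cliqueFree_le_chromaticNumber (r : ℕ) {q : ℕ} (hq : 3 ≤ q) :
    ∃ n, ∃ G : SimpleGraph (Fin n), G.CliqueFree q ∧ (r + 1 : ℕ∞) ≤ G.chromaticNumber := by
  classical
  let S := shiftGraph (Fin (2 ^ r + 1))
  let φ := S.overFinIso rfl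
  refine ⟨_, S.overFin rfl, ?_, ?_⟩
  · exact (shiftGraph_cliqueFree_three.comap φ.isContained').mono hq
  · rw [add_one_le_chromaticNumber_iff]
    intro hcol
    have hcard := card_le_two_pow_of_shiftGraph_colorable (hcol.of_hom φ.toHom)
    simp at hcard

theorem three_mul_add_five_le_card {q r : ℕ} (hrq : r ≤ q + 2) {V : Type u} [Fintype V]
    {G : SimpleGraph V} (hG : G.CliqueFree q) (hχ : (r + 1 : ℕ∞) ≤ G.chromaticNumber) :
    3 * r + 5 ≤ Fintype.card V + 2 * q := by
  rw [add_one_le_chromaticNumber_iff] at hχ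
  contrapose! hχ
  exact colorable_of_cliqueFree hG hrq (by rw [Nat.card_eq_fintype_card]; omega)

theorem stmt_3_general {q r : ℕ} (hq : 3 ≤ q) (hrq : r ≤ q + 2) :
    (∀ (V : Type u) [Fintype V] (G : SimpleGraph V),
        G.CliqueFree q → (r + 1 : ℕ∞) ≤ G.chromaticNumber →
        3 * r + 5 ≤ Fintype.card V + 2 * q) ∧
    3 * r + 5 ≤ folkman r q + 2 * q := by
  refine ⟨fun V _ G hG hχ ↦ three_mul_add_five_le_card hrq hG hχ, ?_⟩
  obtain ⟨G, hG, hχ⟩ := Nat.sInf_mem (exists_fin_cliqueFree_le_chromaticNumber r hq)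
  have hcard := three_mul_add_five_le_card hrq hG hχ
  rwa [Fintype.card_fin] at hcard

theorem stmt_3 (r : ℕ) (hr : 5 ≤ r) :
    (∀ (V : Type) [Fintype V] (G : SimpleGraph V),
        G.CliqueFree (r - 2) → (r + 1 : ℕ∞) ≤ G.chromaticNumber →
        r + 9 ≤ Fintype.card V) ∧
    r + 9 ≤ folkman r (r - 2) := by
  obtain ⟨hcard, hfolkman⟩ := stmt_3_general (q := r - 2) (r := r) (by omega) (by omega)
  exact ⟨fun V _ G hG hχ ↦ by have := hcard V G hG hχ; omega, by omega⟩
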